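/- Let M ∈ K^{p×p} be invertible. Then K^{1×1×p} with entrywise addition and the multiplication *_M is a commutative ring with unity, where the unity is the tensor e ∈ K^{1×1×p} determined by the condition that every frontal slice of e ×₃ M equals 1 (i.e., e = [1|1|⋯|1] ×₃ M⁻¹). -/

import Mathlib

open Matrix

/-- Mode-3 product of a third-order tensor (stack of `p` frontal slices)
with a matrix `M ∈ K^{q×p}`: `(A ×₃ M)ₖ = Σ_l M k l • A l`. -/
def mode3 {K : Type*} [Semiring K] {m n p q : ℕ} (M : Matrix (Fin q) (Fin p) K)
    (A : Fin p → Matrix (Fin m) (Fin n) K) : Fin q → Matrix (Fin m) (Fin n) K :=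
  fun k => ∑ l, M k l • A l

/-- Face-wise product of two third-order tensors. -/
def facewise {K : Type*} [Semiring K] {m n s p : ℕ}
    (A : Fin p → Matrix (Fin m) (Fin n) K) (B : Fin p → Matrix (Fin n) (Fin s) K) :
    Fin p → Matrix (Fin m) (Fin s) K :=
  fun i => A i * B i

/-- Tensor-tensor multiplication `A *_M B = ((A ×₃ M) △ (B ×₃ M)) ×₃ M⁺`. -/
def tmul3 {K : Type*} [Semiring K] {m n s p q : ℕ} (M : Matrix (Fin q) (Fin p) K)
    (Mp : Matrix (Fin p) (Fin q) K)
    (A : Fin p → Matrix (Fin m) (Fin n) K) (B : Fin p → Matrix (Fin n) (Fin s) K) :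
    Fin p → Matrix (Fin m) (Fin s) K :=
  mode3 Mp (facewise (mode3 M A) (mode3 M B))

theorem mode3_mode3 {K : Type*} [Semiring K] {m n p q r : ℕ} (N : Matrix (Fin r) (Fin q) K)
    (M : Matrix (Fin q) (Fin p) K) (A : Fin p → Matrix (Fin m) (Fin n) K) :
    mode3 N (mode3 M A) = mode3 (N * M) A := by
  funext k
  simp only [mode3, Matrix.mul_apply, Finset.smul_sum, Finset.sum_smul, smul_smul]
  exact Finset.sum_comm

theorem mode3_one {K : Type*} [Semiring K] {m n p : ℕ} (A : Fin p → Matrix (Fin m) (Fin n) K) :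
    mode3 (1 : Matrix (Fin p) (Fin p) K) A = A := by
  funext k
  simp [mode3, Matrix.one_apply, ite_smul]

theorem mode3_add {K : Type*} [Semiring K] {m n p q : ℕ} (M : Matrix (Fin q) (Fin p) K)
    (A B : Fin p → Matrix (Fin m) (Fin n) K) :
    mode3 M (A + B) = mode3 M A + mode3 M B := by
  funext k
  simp [mode3, Finset.sum_add_distrib]

theorem facewise_eq_mul {K : Type*} [Semiring K] {n p : ℕ}
    (A B : Fin p → Matrix (Fin n) (Fin n) K) : facewise A B = A * B :=
  rfl

theorem facewise_comm_of_tubes {K : Type*} [CommSemiring K] {p : ℕ}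
    (A B : Fin p → Matrix (Fin 1) (Fin 1) K) : facewise A B = facewise B A := by
  funext k
  ext i j
  simp [facewise, Matrix.mul_apply, Subsingleton.elim i j, Subsingleton.elim j 0, mul_comm]

/-- for invertible `M ∈ K^{p×p}`, the space `K^{1×1×p}` with entrywise
addition and the multiplication `*_M` is a commutative ring whose unity is the tensor
`e = [1|1|⋯|1] ×₃ M⁻¹` (every frontal slice of `e ×₃ M` equals `1`). -/
theorem tube_commRing {K : Type*} [RCLike K] {p : ℕ}
    (M : Matrix (Fin p) (Fin p) K) (hM : IsUnit M.det) :
    let mul : (Fin p → Matrix (Fin 1) (Fin 1) K) → (Fin p → Matrix (Fin 1) (Fin 1) K) →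
        (Fin p → Matrix (Fin 1) (Fin 1) K) := tmul3 M M⁻¹
    let e : Fin p → Matrix (Fin 1) (Fin 1) K := mode3 M⁻¹ (fun _ => 1)
    (∀ a b c, mul (mul a b) c = mul a (mul b c)) ∧
    (∀ a b, mul a b = mul b a) ∧
    (∀ a b c, mul a (b + c) = mul a b + mul a c) ∧
    (∀ a b c, mul (a + b) c = mul a c + mul b c) ∧
    (∀ a, mul e a = a) ∧
    (∀ a, mul a e = a) := by
  intro mul e
  have mode3_left (A : Fin p → Matrix (Fin 1) (Fin 1) K) : mode3 M (mode3 M⁻¹ A) = A := by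
    rw [mode3_mode3, Matrix.mul_nonsing_inv M hM, mode3_one]
  have mode3_right (A : Fin p → Matrix (Fin 1) (Fin 1) K) : mode3 M⁻¹ (mode3 M A) = A := by
    rw [mode3_mode3, Matrix.nonsing_inv_mul M hM, mode3_one]
  have mul_comm' (a b) : mul a b = mul b a := by
    simp only [mul, tmul3, facewise_comm_of_tubes (mode3 M a)]
  have mul_add' (a b c) : mul a (b + c) = mul a b + mul a c := by
    simp only [mul, tmul3, facewise_eq_mul, mode3_add, mul_add]
  have one_mul' (a) : mul e a = a := by
    have ones : (fun _ => 1 : Fin p → Matrix (Fin 1) (Fin 1) K) = 1 := rfl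
    simp only [mul, e, tmul3, facewise_eq_mul, mode3_left, ones, one_mul, mode3_right]
  refine ⟨fun a b c => ?_, mul_comm', mul_add', fun a b c => ?_, one_mul', fun a => ?_⟩
  · simp only [mul, tmul3, facewise_eq_mul, mode3_left, mul_assoc]
  · rw [mul_comm', mul_add', mul_comm' c a, mul_comm' c b]
  · rw [mul_comm', one_mul']
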